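/- For every real G>0, the discriminant D(G)=−2y₀(G)+4G+4G/√(2y₀(G)) is strictly positive, the numbers ω̃₊(G)=(−√(2y₀(G))+√(D(G)))/2 and ω̃₋(G)=(−√(2y₀(G))−√(D(G)))/2 satisfy ω̃₋(G)<ω̃₊(G)<0 and P_G(ω̃₊(G))=P_G(ω̃₋(G))=0, and every real root of P_G equals ω̃₊(G) or ω̃₋(G). -/

import Mathlib

/-- z₀(G) = 32G³+27G²+3√3·√(27G⁴+64G⁵). -/
noncomputable def z₀ (G : ℝ) : ℝ :=
  32 * G ^ 3 + 27 * G ^ 2 + 3 * Real.sqrt 3 * Real.sqrt (27 * G ^ 4 + 64 * G ^ 5)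

/-- z₁(G) = 2^{5/3}·G·z₀(G)^{−1/3}. -/
noncomputable def z₁ (G : ℝ) : ℝ :=
  (2 : ℝ) ^ ((5 : ℝ) / 3) * G * (z₀ G) ^ (-(1 : ℝ) / 3)

/-- y₀(G) = (2G/3)·(1+z₁(G)+z₁(G)⁻¹), a root of the resolvent cubic. -/
noncomputable def y₀ (G : ℝ) : ℝ :=
  (2 * G / 3) * (1 + z₁ G + (z₁ G)⁻¹)

/-- The quartic P_G(k)=k⁴−2Gk²+2Gk+G² determining the critical frequencies. -/
noncomputable def P (G k : ℝ) : ℝ :=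
  k ^ 4 - 2 * G * k ^ 2 + 2 * G * k + G ^ 2

/-- The discriminant D(G)=−2y₀(G)+4G+4G/√(2y₀(G)). -/
noncomputable def Dd (G : ℝ) : ℝ :=
  -2 * y₀ G + 4 * G + 4 * G / Real.sqrt (2 * y₀ G)

/-- The critical frequency closer to the origin, ω̃₊(G)=(−√(2y₀(G))+√(D(G)))/2. -/
noncomputable def ωp (G : ℝ) : ℝ :=
  (-Real.sqrt (2 * y₀ G) + Real.sqrt (Dd G)) / 2

/-- The critical frequency farther from the origin, ω̃₋(G)=(−√(2y₀(G))−√(D(G)))/2. -/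
noncomputable def ωm (G : ℝ) : ℝ :=
  (-Real.sqrt (2 * y₀ G) - Real.sqrt (Dd G)) / 2

/-- The focusing-condition function f(V)=−(3/2)·V·ω̃₊(1/V)³−1. -/
noncomputable def fV (V : ℝ) : ℝ :=
  -(3 / 2) * V * (ωp (1 / V)) ^ 3 - 1

/-!
Ferrari's method: a nonzero root `s` of the resolvent `s² ((s² + p)² - 4r) = q²` splits the quartic
`x⁴ + p x² + q x + r` into two quadratics with linear terms `± s x`. For `P G` the resolvent is a
cubic in `s²`, and Cardano's formula gives its positive root `s² = 2 y₀`. The resolvent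
forces `y₀ > 2G`, so the discriminants of the two quadratics have the negative product
`-4 (3 y₀ + 2G) (y₀ - 2G)`. The second one is visibly negative, so only the first quadratic has real
roots. These are negative because `P G k = (k² - G)² + 2 G k` is positive for `k ≥ 0`.
-/

section Ferrari

variable {K : Type*} [Field K] [NeZero (2 : K)] {p q r s : K}

theorem depressed_quartic_eq_mul (hs : s ≠ 0) (h : s ^ 2 * ((s ^ 2 + p) ^ 2 - 4 * r) = q ^ 2)
    (x : K) :
    x ^ 4 + p * x ^ 2 + q * x + r =
      (x ^ 2 + s * x + (s ^ 2 + p - q / s) / 2) *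
        (x ^ 2 - s * x + (s ^ 2 + p + q / s) / 2) := by
  field_simp
  linear_combination -h

theorem depressed_quartic_eq_zero_iff {d : K} (hs : s ≠ 0)
    (h : s ^ 2 * ((s ^ 2 + p) ^ 2 - 4 * r) = q ^ 2)
    (hd : -s ^ 2 - 2 * p + 2 * q / s = d * d)
    (h_nonsquare : ¬IsSquare (-s ^ 2 - 2 * p - 2 * q / s)) (x : K) :
    x ^ 4 + p * x ^ 2 + q * x + r = 0 ↔ x = (-s + d) / 2 ∨ x = (-s - d) / 2 := by
  have discrim_first : discrim 1 s ((s ^ 2 + p - q / s) / 2) = d * d := by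
    rw [← hd, discrim]
    field_simp
    ring
  have discrim_second :
      discrim 1 (-s) ((s ^ 2 + p + q / s) / 2) = -s ^ 2 - 2 * p - 2 * q / s := by
    rw [discrim]
    field_simp
    ring
  have first_eq_zero_iff :
      x ^ 2 + s * x + (s ^ 2 + p - q / s) / 2 = 0 ↔ x = (-s + d) / 2 ∨ x = (-s - d) / 2 := by
    simpa only [one_mul, mul_one, ← sq] using quadratic_eq_zero_iff one_ne_zero discrim_first x
  have second_ne_zero : x ^ 2 - s * x + (s ^ 2 + p + q / s) / 2 ≠ 0 := by
    have discrim_ne_sq (t : K) : discrim 1 (-s) ((s ^ 2 + p + q / s) / 2) ≠ t ^ 2 :=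
      fun ht ↦ h_nonsquare ⟨t, by rw [← discrim_second, ht, sq]⟩
    simpa only [one_mul, ← sq, neg_mul, ← sub_eq_add_neg] using
      quadratic_ne_zero_of_discrim_ne_sq discrim_ne_sq x
  rw [depressed_quartic_eq_mul hs h, mul_eq_zero_iff_right second_ne_zero, first_eq_zero_iff]

end Ferrari

-- With `w = z + z⁻¹` the left side is `c³ (w³ - 3w - 2)`, and `w³ - 3w = z³ + z⁻³`.
theorem cardano_cube_sub_three_mul_sq {K : Type*} [Field K] {z : K} (hz : z ≠ 0) (c : K) :
    (c * (1 + z + z⁻¹)) ^ 3 - 3 * c * (c * (1 + z + z⁻¹)) ^ 2 =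
      c ^ 3 * (z ^ 3 + (z ^ 3)⁻¹ - 2) := by
  field_simp
  ring

section CriticalFrequencies

variable {G : ℝ}

theorem z₀_pos (hG : 0 < G) : 0 < z₀ G := by
  unfold z₀
  positivity

theorem z₁_pos (hG : 0 < G) : 0 < z₁ G := by
  have := z₀_pos hG
  unfold z₁
  positivity

theorem z₀_sq_add_sq (hG : 0 ≤ G) :
    z₀ G ^ 2 + (32 * G ^ 3) ^ 2 = 2 * (32 * G ^ 3 + 27 * G ^ 2) * z₀ G := by
  have radical_sq : (3 * √3 * √(27 * G ^ 4 + 64 * G ^ 5)) ^ 2 =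
      27 * (27 * G ^ 4 + 64 * G ^ 5) := by
    rw [mul_pow, mul_pow, Real.sq_sqrt (by norm_num), Real.sq_sqrt (by positivity)]
    ring
  unfold z₀
  linear_combination radical_sq

theorem z₁_pow_three (hG : 0 < G) : z₁ G ^ 3 = 32 * G ^ 3 / z₀ G := by
  have two_rpow : ((2 : ℝ) ^ ((5 : ℝ) / 3)) ^ 3 = 32 := by
    rw [← Real.rpow_mul_natCast zero_le_two]
    norm_num
  have z₀_rpow : (z₀ G ^ (-(1 : ℝ) / 3)) ^ 3 = (z₀ G)⁻¹ := by
    rw [← Real.rpow_mul_natCast (z₀_pos hG).le, ← Real.rpow_neg_one]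
    norm_num
  rw [z₁, mul_pow, mul_pow, two_rpow, z₀_rpow, div_eq_mul_inv]

theorem z₁_pow_three_add_inv (hG : 0 < G) :
    z₁ G ^ 3 + (z₁ G ^ 3)⁻¹ = 2 + 27 / (16 * G) := by
  have z₀_ne_zero := (z₀_pos hG).ne'
  rw [z₁_pow_three hG]
  field_simp
  linear_combination 16 * z₀_sq_add_sq hG.le

theorem y₀_pos (hG : 0 < G) : 0 < y₀ G := by
  have := z₁_pos hG
  unfold y₀
  positivity

theorem y₀_resolvent (hG : 0 < G) : (2 * y₀ G) ^ 2 * (2 * y₀ G - 4 * G) = 4 * G ^ 2 := by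
  have y₀_eq : 2 * y₀ G = 4 * G / 3 * (1 + z₁ G + (z₁ G)⁻¹) := by
    unfold y₀
    ring
  calc (2 * y₀ G) ^ 2 * (2 * y₀ G - 4 * G)
      = (2 * y₀ G) ^ 3 - 3 * (4 * G / 3) * (2 * y₀ G) ^ 2 := by ring
    _ = (4 * G / 3) ^ 3 * (z₁ G ^ 3 + (z₁ G ^ 3)⁻¹ - 2) := by
      rw [y₀_eq, cardano_cube_sub_three_mul_sq (z₁_pos hG).ne']
    _ = 4 * G ^ 2 := by
      rw [z₁_pow_three_add_inv hG]
      field_simp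
      ring

theorem two_mul_lt_y₀ (hG : 0 < G) : 2 * G < y₀ G := by
  have product_pos : 0 < (2 * y₀ G) ^ 2 * (2 * y₀ G - 4 * G) := by
    rw [y₀_resolvent hG]
    positivity
  linarith [pos_of_mul_pos_right product_pos (sq_nonneg _)]

/-- The discriminant of the Ferrari factor of `P G` other than the one with discriminant `Dd G`;
it differs from `Dd G` in the sign of `√(2 * y₀ G)`. -/
noncomputable def conjDd (G : ℝ) : ℝ :=
  -2 * y₀ G + 4 * G - 4 * G / √(2 * y₀ G)

theorem conjDd_neg (hG : 0 < G) : conjDd G < 0 := by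
  have := two_mul_lt_y₀ hG
  have : 0 ≤ 4 * G / √(2 * y₀ G) := by positivity
  unfold conjDd
  linarith

theorem Dd_mul_conjDd (hG : 0 < G) :
    Dd G * conjDd G = -4 * (3 * y₀ G + 2 * G) * (y₀ G - 2 * G) := by
  have y₀_ne_zero := (y₀_pos hG).ne'
  have quotient_sq : (4 * G / √(2 * y₀ G)) ^ 2 = 8 * y₀ G * (2 * y₀ G - 4 * G) := by
    rw [div_pow, Real.sq_sqrt (by linarith [y₀_pos hG])]
    field_simp
    linear_combination -4 * y₀_resolvent hG
  unfold Dd conjDd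
  linear_combination -quotient_sq

theorem Dd_pos (hG : 0 < G) : 0 < Dd G := by
  have product_neg : Dd G * conjDd G < 0 := by
    rw [Dd_mul_conjDd hG]
    nlinarith [two_mul_lt_y₀ hG, y₀_pos hG]
  exact pos_of_mul_neg_left product_neg (conjDd_neg hG).le

theorem P_eq_zero_iff (hG : 0 < G) (k : ℝ) : P G k = 0 ↔ k = ωp G ∨ k = ωm G := by
  have sqrt_sq : √(2 * y₀ G) ^ 2 = 2 * y₀ G := Real.sq_sqrt (by linarith [y₀_pos hG])
  have sqrt_ne_zero : √(2 * y₀ G) ≠ 0 := (Real.sqrt_pos.2 (by linarith [y₀_pos hG])).ne'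
  have resolvent : √(2 * y₀ G) ^ 2 * ((√(2 * y₀ G) ^ 2 + -2 * G) ^ 2 - 4 * G ^ 2) =
      (2 * G) ^ 2 := by
    rw [sqrt_sq]
    linear_combination y₀_resolvent hG
  have discrim_eq : -√(2 * y₀ G) ^ 2 - 2 * (-2 * G) + 2 * (2 * G) / √(2 * y₀ G) =
      √(Dd G) * √(Dd G) := by
    rw [Real.mul_self_sqrt (Dd_pos hG).le, sqrt_sq, Dd]
    ring
  have conj_discrim_eq : -√(2 * y₀ G) ^ 2 - 2 * (-2 * G) - 2 * (2 * G) / √(2 * y₀ G) =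
      conjDd G := by
    rw [sqrt_sq, conjDd]
    ring
  have conj_nonsquare :
      ¬IsSquare (-√(2 * y₀ G) ^ 2 - 2 * (-2 * G) - 2 * (2 * G) / √(2 * y₀ G)) := by
    rw [conj_discrim_eq]
    exact fun h ↦ (conjDd_neg hG).not_ge h.nonneg
  have P_eq : P G k = k ^ 4 + -2 * G * k ^ 2 + 2 * G * k + G ^ 2 := by
    unfold P
    ring
  rw [P_eq, ωp, ωm]
  exact depressed_quartic_eq_zero_iff sqrt_ne_zero resolvent discrim_eq conj_nonsquare k

theorem P_pos_of_nonneg (hG : 0 < G) {k : ℝ} (hk : 0 ≤ k) : 0 < P G k := by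
  have P_eq : P G k = (k ^ 2 - G) ^ 2 + 2 * G * k := by
    unfold P
    ring
  rw [P_eq]
  obtain rfl | hk := hk.eq_or_lt
  · nlinarith
  · positivity

theorem ωm_lt_ωp (hD : 0 < Dd G) : ωm G < ωp G := by
  unfold ωm ωp
  linarith [Real.sqrt_pos.2 hD]

end CriticalFrequencies

/-- For G>0, the discriminant D(G) is positive, ω̃₋(G) < ω̃₊(G) < 0 are roots of the
quartic P_G, and every real root of P_G is one of them. -/
theorem critical_frequencies (G : ℝ) (hG : 0 < G) :
    0 < Dd G ∧ ωm G < ωp G ∧ ωp G < 0 ∧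
      P G (ωp G) = 0 ∧ P G (ωm G) = 0 ∧
      ∀ k : ℝ, P G k = 0 → k = ωp G ∨ k = ωm G := by
  have root_iff := P_eq_zero_iff hG
  have ωp_root : P G (ωp G) = 0 := (root_iff _).2 (.inl rfl)
  have ωm_root : P G (ωm G) = 0 := (root_iff _).2 (.inr rfl)
  have ωp_neg : ωp G < 0 := by
    by_contra! ωp_nonneg
    exact (P_pos_of_nonneg hG ωp_nonneg).ne' ωp_root
  exact ⟨Dd_pos hG, ωm_lt_ωp (Dd_pos hG), ωp_neg, ωp_root, ωm_root, fun k ↦ (root_iff k).1⟩
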